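/- arXiv:1605.00978 — 2 statements merged into one kernel-verified Lean document; each statement's English description precedes it below -/
import Mathlib

section
/- Let 𝒟 = (D_0,…,D_m) be a D-flag of length m with gaps g_1 < … < g_m, and let 𝓜_0 ⊆ 𝓜_1 ⊆ … ⊆ 𝓜_m be a flag of standard modules with D_{𝓜_i} = D_i for all i. Then, writing 𝓜̄ = 𝓜_m/𝔪𝓜_m and 𝓜̄^{(j)} for the image of 𝓜_m ∩ z^j𝒪 in 𝓜̄, one has dim_ℂ(𝓜̄^{(g_i)}/𝓜̄^{(g_i+1)}) = 1 for every 1 ≤ i ≤ m. -/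
open PowerSeries

noncomputable section

/-- `𝒪 = ℂ⟦z⟧`, the ring of formal power series over `ℂ`. -/
abbrev 𝒪 : Type := PowerSeries ℂ

/-- `ν(f)`: the order of a power series (least `n` with nonzero coefficient);
only meaningful for `f ≠ 0`. -/
noncomputable def ord (f : 𝒪) : ℕ := sInf {n : ℕ | PowerSeries.coeff n f ≠ 0}

/-- The value semigroup `Γ = {ν(x) : 0 ≠ x ∈ ℛ}` of a subalgebra `ℛ ⊆ 𝒪`. -/
def SGamma (R : Subalgebra ℂ 𝒪) : Set ℕ := {n | ∃ x ∈ R, x ≠ (0:𝒪) ∧ ord x = n}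

/-- The set of gaps `G = ℕ ∖ Γ`. -/
def Gaps (R : Subalgebra ℂ 𝒪) : Set ℕ := (SGamma R)ᶜ

/-- `Δ` is a `Γ`-module: `Γ + Δ ⊆ Δ`. -/
def IsGammaModule (Γ Δ : Set ℕ) : Prop := ∀ a ∈ Γ, ∀ d ∈ Δ, a + d ∈ Δ

/-- `Δ_𝓜 = {ν(x) : 0 ≠ x ∈ 𝓜}` for an `ℛ`-submodule `𝓜 ⊆ 𝒪`. -/
def DeltaM (R : Subalgebra ℂ 𝒪) (M : Submodule ↥R 𝒪) : Set ℕ :=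
  {n | ∃ x ∈ M, x ≠ (0:𝒪) ∧ ord x = n}

/-- `D_𝓜 = Δ_𝓜 ∩ G`, the set of added gaps. -/
def Dset (R : Subalgebra ℂ 𝒪) (M : Submodule ↥R 𝒪) : Set ℕ := DeltaM R M ∩ Gaps R

/-- A standard module: a finitely generated `ℛ`-submodule of `𝒪` containing an
element of order `0`. -/
def IsStd (R : Subalgebra ℂ 𝒪) (M : Submodule ↥R 𝒪) : Prop :=
  M.FG ∧ ∃ x ∈ M, x ≠ (0:𝒪) ∧ ord x = 0

/-- `c ≥ 1` is the conductor of `ℛ`: the minimal exponent with `z^c𝒪 ⊆ ℛ`. -/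
def HasConductor (R : Subalgebra ℂ 𝒪) (c : ℕ) : Prop :=
  1 ≤ c ∧ (∀ f : 𝒪, (PowerSeries.X : 𝒪)^c * f ∈ R) ∧
    ∀ c' : ℕ, (∀ f : 𝒪, (PowerSeries.X : 𝒪)^c' * f ∈ R) → c ≤ c'

/-- `z^j𝒪` as a `ℂ`-submodule of `𝒪`. -/
def zO (j : ℕ) : Submodule ℂ 𝒪 :=
  LinearMap.range (LinearMap.mulLeft ℂ ((PowerSeries.X : 𝒪)^j))

/-- `𝔪𝓜` as a `ℂ`-submodule of `𝒪`, where `𝔪 = {x ∈ ℛ : x = 0 or ν(x) > 0}`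
is the maximal ideal of `ℛ`. -/
def mSmul (R : Subalgebra ℂ 𝒪) (M : Submodule ↥R 𝒪) : Submodule ℂ 𝒪 :=
  Submodule.span ℂ {z : 𝒪 | ∃ r ∈ (R : Set 𝒪), ∃ y ∈ M, (r = 0 ∨ 0 < ord r) ∧ z = r * y}

/-- `dim_ℂ (A / B)` for `ℂ`-subspaces; intended for `B ≤ A`. -/
noncomputable def quotDim (A B : Submodule ℂ 𝒪) : ℕ :=
  Module.finrank ℂ (↥A ⧸ Submodule.comap A.subtype B)

/-- `D_i = D_0 ∪ {g_1, …, g_i}` (the gaps `g` are indexed by `1, …, m`). -/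
def DFlagSet (D0 : Set ℕ) (g : ℕ → ℕ) (i : ℕ) : Set ℕ := D0 ∪ g '' Set.Icc 1 i

/-- `(D_0, …, D_m)` with `D_i = D_0 ∪ {g_1 < … < g_i}` is a `D`-flag:
all `Δ_i = Γ ∪ D_i` are `Γ`-modules. -/
def IsDFlag (R : Subalgebra ℂ 𝒪) (m : ℕ) (D0 : Set ℕ) (g : ℕ → ℕ) : Prop :=
  D0 ⊆ Gaps R ∧ StrictMonoOn g (Set.Icc 1 m) ∧
  (∀ i, 1 ≤ i → i ≤ m → g i ∈ Gaps R \ D0) ∧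
  (∀ i ≤ m, IsGammaModule (SGamma R) (SGamma R ∪ DFlagSet D0 g i))

/-- A `D`-flag is admissible if it is realized by a flag of standard modules. -/
def IsAdmissibleFlag (R : Subalgebra ℂ 𝒪) (m : ℕ) (D0 : Set ℕ) (g : ℕ → ℕ) : Prop :=
  ∃ MM : ℕ → Submodule ↥R 𝒪, (∀ i, i < m → MM i ≤ MM (i+1)) ∧
    ∀ i ≤ m, IsStd R (MM i) ∧ Dset R (MM i) = DFlagSet D0 g i

/-- The subalgebra `ℂ[z^a, z^b + z^c] + z^N ℂ⟦z⟧` of `𝒪`. -/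
def Rring (a b c N : ℕ) : Subalgebra ℂ 𝒪 where
  carrier := {f : 𝒪 | ∃ p ∈ Algebra.adjoin ℂ
      ({(PowerSeries.X : 𝒪)^a, (PowerSeries.X : 𝒪)^b + (PowerSeries.X : 𝒪)^c} : Set 𝒪),
    ∃ g : 𝒪, f = p + (PowerSeries.X : 𝒪)^N * g}
  mul_mem' := by
    rintro x y ⟨p, hp, gx, rfl⟩ ⟨q, hq, gy, rfl⟩
    exact ⟨p * q, mul_mem hp hq,
      p * gy + gx * q + (PowerSeries.X : 𝒪)^N * (gx * gy), by ring⟩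
  one_mem' := ⟨1, one_mem _, 0, by ring⟩
  add_mem' := by
    rintro x y ⟨p, hp, gx, rfl⟩ ⟨q, hq, gy, rfl⟩
    exact ⟨p + q, add_mem hp hq, gx + gy, by ring⟩
  zero_mem' := ⟨0, zero_mem _, 0, by ring⟩
  algebraMap_mem' := fun r => ⟨algebraMap ℂ 𝒪 r, Subalgebra.algebraMap_mem _ r, 0, by ring⟩

/-- The ring `ℂ⟦z^4, z^{2u}+z^v⟧ = ℂ[z^4, z^{2u}+z^v] + z^{4u+v}ℂ⟦z⟧` for the
plane curve singularity with Puiseux exponents `(4, 2u, v)`. -/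
def Rcal (u v : ℕ) : Subalgebra ℂ 𝒪 := Rring 4 (2*u) v (4*u+v)

/-- The gap counting function `γ_Δ(ℓ) = |[ℓ,∞) ∖ Δ|`. -/
noncomputable def gapCount (Δ : Set ℕ) (ℓ : ℕ) : ℕ := Set.ncard {k : ℕ | ℓ ≤ k ∧ k ∉ Δ}

/-- `n = n(D)`: the smallest odd number in `(Δ ∪ {v}) ∩ [2u, ∞)`. -/
noncomputable def nOdd (u v : ℕ) (Δ : Set ℕ) : ℕ :=
  sInf {k : ℕ | Odd k ∧ 2*u ≤ k ∧ (k ∈ Δ ∨ k = v)}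

/-- The dimension change `μ_{D,g}` of Theorem `dimprop` (for the family `(4,2u,v)`),
where `Γ` is the value semigroup. -/
noncomputable def muDim (u v : ℕ) (Γ : Set ℕ) (D : Set ℕ) (gp : ℕ) : ℕ :=
  let Δ : Set ℕ := Γ ∪ D
  let Δ' : Set ℕ := Δ ∪ {gp}
  let n : ℕ := nOdd u v Δ
  if gp % 4 = 2 then
    (gapCount Δ' gp - gapCount Δ' (gp+4)) - (gapCount Δ' (gp+n) - gapCount Δ' (gp+4+n))
  else gapCount Δ' gp - gapCount Δ' (gp+4)

/-!
For `R`-submodules `N ⊆ M` of `K⟦X⟧` whose sets of orders agree below `n`, successive cancellation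
of leading terms gives `M ⊆ N + X ^ n K⟦X⟧`. Multiplication by `𝔪` raises orders, so
`𝔪M ⊆ N + X ^ (n + 1) K⟦X⟧`, and therefore an element of order `n` of `M` can lie in
`(M ∩ X ^ (n + 1) K⟦X⟧) + 𝔪M` only if `N` also has an element of order `n`. For a flag, take
`n = g_i`, `N = M_{i-1}` and `M = M_m`: the added gaps below `g_i` are already orders of
`M_{i-1}`, while `g_i` is not, so the `g_i`-th graded piece of `M / 𝔪M` does not
vanish. It is spanned by any one element of order `g_i`.
-/

section OrderFiltration

variable {A R : Type*} [CommSemiring A] [CommSemiring R] [Algebra R A⟦X⟧]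

/-- The set `Δ_M` of orders of the nonzero elements of `M`. -/
def orderSet (M : Submodule R A⟦X⟧) : Set ℕ := {n | ∃ f ∈ M, f.order = n}

variable (R) in
/-- The power series of order at least `n`, as an `R`-submodule: `X ^ n A⟦X⟧`. -/
def orderFiltration (n : ℕ) : Submodule R A⟦X⟧ :=
  (Ideal.span {(X : A⟦X⟧) ^ n}).restrictScalars R

variable (A R) in
/-- The ideal of the elements of `R` whose power series has no constant term. For a subalgebra `R`
of `A⟦X⟧` this is the ideal `𝔪`. -/
def positiveOrderIdeal : Ideal R :=
  (Ideal.span {(X : A⟦X⟧)}).comap (algebraMap R A⟦X⟧)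

theorem mem_orderFiltration {n : ℕ} {f : A⟦X⟧} : f ∈ orderFiltration R n ↔ X ^ n ∣ f :=
  Ideal.mem_span_singleton

theorem mem_positiveOrderIdeal {r : R} :
    r ∈ positiveOrderIdeal A R ↔ (X : A⟦X⟧) ∣ algebraMap R A⟦X⟧ r :=
  Ideal.mem_span_singleton

theorem orderFiltration_zero : orderFiltration R 0 = (⊤ : Submodule R A⟦X⟧) :=
  eq_top_iff.2 fun _ _ => mem_orderFiltration.2 (by simp)

theorem orderFiltration_antitone :
    Antitone (orderFiltration R : ℕ → Submodule R A⟦X⟧) := fun _ _ hmn _ hf =>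
  mem_orderFiltration.2 ((pow_dvd_pow X hmn).trans (mem_orderFiltration.1 hf))

theorem mem_orderFiltration_succ {n : ℕ} {f : A⟦X⟧} (hf : f ∈ orderFiltration R n) :
    f ∈ orderFiltration R (n + 1) ↔ coeff n f = 0 := by
  rw [mem_orderFiltration, X_pow_dvd_iff] at hf ⊢
  exact ⟨fun h => h n n.lt_succ_self, fun h k hk =>
    (Nat.lt_succ_iff_lt_or_eq.1 hk).elim (hf k) fun hkn => hkn ▸ h⟩

theorem order_eq_iff_mem_orderFiltration {n : ℕ} {f : A⟦X⟧} :
    f.order = n ↔ f ∈ orderFiltration R n ∧ f ∉ orderFiltration R (n + 1) := by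
  rw [order_eq_nat, and_comm, ← X_pow_dvd_iff, ← mem_orderFiltration (R := R)]
  exact and_congr_right fun hf => (mem_orderFiltration_succ hf).not.symm

theorem positiveOrderIdeal_smul_orderFiltration_le (n : ℕ) :
    positiveOrderIdeal A R • (orderFiltration R n : Submodule R A⟦X⟧) ≤
      orderFiltration R (n + 1) :=
  Submodule.smul_le.2 fun r hr f hf => by
    rw [mem_orderFiltration, Algebra.smul_def, pow_succ']
    exact mul_dvd_mul (mem_positiveOrderIdeal.1 hr) (mem_orderFiltration.1 hf)

end OrderFiltration

section Fiber

variable {K R : Type*} [Field K] [CommRing R] [Algebra R K⟦X⟧]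

theorem exists_sub_smul_mem_orderFiltration {n : ℕ} {x f : K⟦X⟧} (hx : x.order = n)
    (hf : f ∈ orderFiltration R n) : ∃ a : K, f - a • x ∈ orderFiltration R (n + 1) := by
  obtain ⟨hx_mem, hx_notMem⟩ := (order_eq_iff_mem_orderFiltration (R := K)).1 hx
  have hx_coeff : coeff n x ≠ 0 := (mem_orderFiltration_succ hx_mem).not.1 hx_notMem
  refine ⟨coeff n f / coeff n x, (mem_orderFiltration_succ (R := K) ?_).2 ?_⟩
  · exact sub_mem hf (Submodule.smul_mem _ _ hx_mem)
  · rw [map_sub, map_smul, smul_eq_mul, div_mul_cancel₀ _ hx_coeff, sub_self]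

variable [Algebra K R] [IsScalarTower K R K⟦X⟧] {N M : Submodule R K⟦X⟧} {n : ℕ}

theorem le_sup_orderFiltration (hNM : N ≤ M) (horders : ∀ k < n, k ∈ orderSet M → k ∈ orderSet N) :
    M ≤ N ⊔ orderFiltration R n := by
  induction n with
  | zero => simp only [orderFiltration_zero, sup_top_eq, le_top]
  | succ n ih =>
    intro f hf
    obtain ⟨a, ha, b, hb, rfl⟩ :=
      Submodule.mem_sup.1 (ih (fun k hk => horders k (hk.trans n.lt_succ_self)) hf)
    by_cases hb' : b ∈ orderFiltration R (n + 1)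
    · exact Submodule.add_mem_sup ha hb'
    have hbM : b ∈ M := (M.add_mem_iff_right (hNM ha)).1 hf
    obtain ⟨x, hxN, hx⟩ :=
      horders n n.lt_succ_self ⟨b, hbM, order_eq_iff_mem_orderFiltration.2 ⟨hb, hb'⟩⟩
    obtain ⟨c, hc⟩ := exists_sub_smul_mem_orderFiltration hx hb
    rw [show a + b = (a + c • x) + (b - c • x) by ring]
    exact Submodule.add_mem_sup (N.add_mem ha (N.smul_of_tower_mem c hxN)) hc

variable (K) in
/-- The preimage in `M` of the `n`-th step `M̄^{(n)}` of the order filtration on `M̄ = M / 𝔪M`,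
namely `(M ∩ X ^ n K⟦X⟧) + 𝔪M`, as a `K`-subspace. -/
def fiberFiltration (M : Submodule R K⟦X⟧) (n : ℕ) : Submodule K K⟦X⟧ :=
  (M ⊓ orderFiltration R n ⊔ positiveOrderIdeal K R • M).restrictScalars K

theorem fiberFiltration_eq_span_sup {x : K⟦X⟧} (hxM : x ∈ M) (hx : x.order = n) :
    fiberFiltration K M n = K ∙ x ⊔ fiberFiltration K M (n + 1) := by
  have hx_mem : x ∈ orderFiltration R n := (order_eq_iff_mem_orderFiltration.1 hx).1
  apply le_antisymm
  · intro f hf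
    obtain ⟨a, ⟨haM, ha⟩, b, hb, rfl⟩ := Submodule.mem_sup.1 hf
    obtain ⟨c, hc⟩ := exists_sub_smul_mem_orderFiltration hx ha
    have hrest : a - c • x + b ∈ fiberFiltration K M (n + 1) :=
      Submodule.add_mem_sup ⟨M.sub_mem haM (M.smul_of_tower_mem c hxM), hc⟩ hb
    rw [show a + b = c • x + (a - c • x + b) by ring]
    exact Submodule.add_mem_sup (Submodule.smul_mem _ c (Submodule.mem_span_singleton_self x)) hrest
  · refine sup_le ((Submodule.span_singleton_le_iff_mem _ _).2 ?_) ?_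
    · exact Submodule.mem_sup_left (Submodule.mem_inf.2 ⟨hxM, hx_mem⟩)
    · exact sup_le_sup_right (inf_le_inf_left M (orderFiltration_antitone n.le_succ)) _

theorem fiberFiltration_succ_le (hNM : N ≤ M)
    (horders : ∀ k < n, k ∈ orderSet M → k ∈ orderSet N) :
    fiberFiltration K M (n + 1) ≤ (N ⊔ orderFiltration R (n + 1)).restrictScalars K := by
  refine sup_le (a := M ⊓ _) (inf_le_right.trans le_sup_right) ?_
  calc positiveOrderIdeal K R • M
      ≤ positiveOrderIdeal K R • (N ⊔ orderFiltration R n) :=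
        smul_mono_right _ (le_sup_orderFiltration hNM horders)
    _ = positiveOrderIdeal K R • N ⊔ positiveOrderIdeal K R • orderFiltration R n :=
        Submodule.smul_sup _ _ _
    _ ≤ N ⊔ orderFiltration R (n + 1) :=
        sup_le_sup Submodule.smul_le_right (positiveOrderIdeal_smul_orderFiltration_le n)

theorem fiberFiltration_succ_covBy (hNM : N ≤ M)
    (horders : ∀ k < n, k ∈ orderSet M → k ∈ orderSet N)
    (hnM : n ∈ orderSet M) (hnN : n ∉ orderSet N) :
    fiberFiltration K M (n + 1) ⋖ fiberFiltration K M n := by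
  obtain ⟨x, hxM, hx⟩ := hnM
  rw [fiberFiltration_eq_span_sup hxM hx]
  refine Submodule.covBy_span_singleton_sup fun hx_mem => hnN ?_
  obtain ⟨a, ha, b, hb, rfl⟩ :=
    Submodule.mem_sup.1 (fiberFiltration_succ_le hNM horders hx_mem)
  obtain ⟨hab, hab'⟩ := (order_eq_iff_mem_orderFiltration (R := R)).1 hx
  refine ⟨a, ha, (order_eq_iff_mem_orderFiltration (R := R)).2 ⟨?_, ?_⟩⟩
  · exact (Submodule.add_mem_iff_left _ (orderFiltration_antitone n.le_succ hb)).1 hab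
  · exact fun ha' => hab' (Submodule.add_mem _ ha' hb)

end Fiber

theorem finrank_quotient_submoduleOf_eq_one_of_covBy {K V : Type*} [DivisionRing K]
    [AddCommGroup V] [Module K V] {U W : Submodule K V} (h : U ⋖ W) :
    Module.finrank K (W ⧸ U.submoduleOf W) = 1 :=
  isSimpleModule_iff_finrank_eq_one.1 ((covBy_iff_quot_is_simple h.le).1 h)

theorem mem_union_image_Icc_of_lt {α : Type*} [Preorder α] {Δ : Set α} {g : ℕ → α} {m i : ℕ}
    {k : α} (hg : StrictMonoOn g (Set.Icc 1 m)) (hi : i < m) (hk : k < g (i + 1))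
    (hkm : k ∈ Δ ∪ g '' Set.Icc 1 m) : k ∈ Δ ∪ g '' Set.Icc 1 i := by
  refine hkm.imp_right ?_
  rintro ⟨j, hj, rfl⟩
  exact ⟨j, ⟨hj.1, Nat.lt_succ_iff.1 ((hg.lt_iff_lt hj ⟨i.succ_pos, hi⟩).1 hk)⟩, rfl⟩

theorem notMem_union_image_Icc {α : Type*} [Preorder α] {Δ : Set α} {g : ℕ → α} {m i : ℕ}
    (hg : StrictMonoOn g (Set.Icc 1 m)) (hi : i < m) (hgΔ : g (i + 1) ∉ Δ) :
    g (i + 1) ∉ Δ ∪ g '' Set.Icc 1 i := by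
  rintro (h | ⟨j, hj, hji⟩)
  · exact hgΔ h
  · exact (hg ⟨hj.1, hj.2.trans hi.le⟩ ⟨i.succ_pos, hi⟩ (Nat.lt_succ_iff.2 hj.2)).ne hji

theorem statement5_general {K R : Type*} [Field K] [CommRing R] [Algebra K R] [Algebra R K⟦X⟧]
    [IsScalarTower K R K⟦X⟧] {m : ℕ} {Δ : Set ℕ} {g : ℕ → ℕ}
    (hg : StrictMonoOn g (Set.Icc 1 m)) (hgΔ : ∀ i, 1 ≤ i → i ≤ m → g i ∉ Δ)
    (M : ℕ → Submodule R K⟦X⟧) (hM : ∀ i < m, M i ≤ M (i + 1))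
    (hΔ : ∀ i ≤ m, orderSet (M i) = Δ ∪ g '' Set.Icc 1 i) (i : ℕ) (hi : 1 ≤ i) (him : i ≤ m) :
    Module.finrank K (fiberFiltration K (M m) (g i) ⧸
      (fiberFiltration K (M m) (g i + 1)).submoduleOf (fiberFiltration K (M m) (g i))) = 1 := by
  obtain ⟨i, rfl⟩ := Nat.exists_eq_add_of_le' hi
  have hmono : MonotoneOn M (Set.Iic m) :=
    monotoneOn_of_le_add_one Set.ordConnected_Iic fun j _ _ hj => hM j hj
  apply finrank_quotient_submoduleOf_eq_one_of_covBy
  apply fiberFiltration_succ_covBy (N := M i)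
  · exact hmono (Nat.le_of_lt him) (le_refl m) (Nat.le_of_lt him)
  all_goals simp only [hΔ m le_rfl, hΔ i (Nat.le_of_lt him)]
  · exact fun k hk => mem_union_image_Icc_of_lt hg him hk
  · exact Or.inr ⟨i + 1, ⟨hi, him⟩, rfl⟩
  · exact notMem_union_image_Icc hg him (hgΔ (i + 1) hi him)

section Specialization

variable {R : Subalgebra ℂ 𝒪} {M : Submodule R 𝒪}

theorem order_eq_ord {f : 𝒪} (hf : f ≠ 0) : f.order = ord f := by
  have hne : {n | coeff n f ≠ 0}.Nonempty := exists_coeff_ne_zero_iff_ne_zero.2 hf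
  exact order_eq_nat.2 ⟨Nat.sInf_mem hne, fun _ hn => not_not.1 (Nat.notMem_of_lt_sInf hn)⟩

theorem order_eq_iff_ord_eq {f : 𝒪} {n : ℕ} : f.order = n ↔ f ≠ 0 ∧ ord f = n := by
  by_cases hf : f = 0
  · simp [hf]
  · simp [hf, order_eq_ord hf]

theorem orderSet_eq_DeltaM : orderSet M = DeltaM R M := by
  simp only [orderSet, DeltaM, order_eq_iff_ord_eq]

theorem zO_eq_orderFiltration (n : ℕ) : zO n = (orderFiltration R n).restrictScalars ℂ :=
  Submodule.ext fun _ => (exists_congr fun _ => eq_comm).trans mem_orderFiltration.symm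

theorem mem_positiveOrderIdeal_iff_ord_pos {r : R} :
    r ∈ positiveOrderIdeal ℂ R ↔ (r : 𝒪) = 0 ∨ 0 < ord r := by
  rw [mem_positiveOrderIdeal, X_dvd_iff, ← order_ne_zero_iff_constCoeff_eq_zero,
    Subalgebra.algebraMap_def]
  by_cases hr : (r : 𝒪) = 0
  · simp [hr]
  · simp [hr, order_eq_ord hr, Nat.pos_iff_ne_zero]

theorem mSmul_eq_positiveOrderIdeal_smul :
    mSmul R M = (positiveOrderIdeal ℂ R • M).restrictScalars ℂ := by
  apply le_antisymm
  · rw [mSmul, Submodule.span_le]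
    rintro _ ⟨r, hr, y, hy, hr_pos, rfl⟩
    have hr_mem : (⟨r, hr⟩ : R) ∈ positiveOrderIdeal ℂ R :=
      mem_positiveOrderIdeal_iff_ord_pos.2 hr_pos
    rw [SetLike.mem_coe, Submodule.restrictScalars_mem]
    exact Submodule.smul_mem_smul hr_mem hy
  · intro f hf
    rw [Submodule.restrictScalars_mem] at hf
    refine Submodule.smul_induction_on hf (fun r hr y hy => ?_) fun _ _ => (mSmul R M).add_mem
    exact Submodule.subset_span ⟨r, r.2, y, hy, mem_positiveOrderIdeal_iff_ord_pos.1 hr, rfl⟩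

theorem fiberFiltration_eq_inf_zO_sup_mSmul (n : ℕ) :
    fiberFiltration ℂ M n = (M.restrictScalars ℂ ⊓ zO n) ⊔ mSmul R M := by
  rw [fiberFiltration, Submodule.restrictScalars_sup, Submodule.restrictScalars_inf,
    ← zO_eq_orderFiltration, ← mSmul_eq_positiveOrderIdeal_smul]

theorem SGamma_subset_orderSet (hM : IsStd R M) : SGamma R ⊆ orderSet M := by
  rintro n ⟨r, hr, hr0, hrn⟩
  obtain ⟨-, u, hu, hu0, hun⟩ := hM
  refine ⟨r * u, M.smul_mem ⟨r, hr⟩ hu, ?_⟩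
  rw [order_mul, order_eq_ord hr0, order_eq_ord hu0, hrn, hun, Nat.cast_zero, add_zero]

theorem orderSet_eq_SGamma_union_Dset (hM : IsStd R M) : orderSet M = SGamma R ∪ Dset R M := by
  rw [Dset, Gaps, ← orderSet_eq_DeltaM, ← Set.sdiff_eq,
    Set.union_sdiff_cancel (SGamma_subset_orderSet hM)]

theorem orderSet_eq_of_Dset_eq_DFlagSet (hM : IsStd R M) {D : Set ℕ} {g : ℕ → ℕ} {i : ℕ}
    (hD : Dset R M = DFlagSet D g i) : orderSet M = (SGamma R ∪ D) ∪ g '' Set.Icc 1 i := by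
  rw [orderSet_eq_SGamma_union_Dset hM, hD, DFlagSet, Set.union_assoc]

theorem IsDFlag.notMem_SGamma_union {m : ℕ} {D : Set ℕ} {g : ℕ → ℕ} (h : IsDFlag R m D g) (i : ℕ)
    (hi : 1 ≤ i) (him : i ≤ m) : g i ∉ SGamma R ∪ D :=
  not_or.2 (h.2.2.1 i hi him)

end Specialization

/-- For a flag of standard modules realizing a `D`-flag, with `𝓜̄ = 𝓜_m/𝔪𝓜_m`
and `𝓜̄^{(j)}` the image of `𝓜_m ∩ z^j𝒪` in `𝓜̄`, one has
`dim_ℂ(𝓜̄^{(g_i)}/𝓜̄^{(g_i+1)}) = 1` for every `1 ≤ i ≤ m`. (The quotient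
`𝓜̄^{(g)}/𝓜̄^{(g+1)}` is encoded as `((𝓜_m ∩ z^g𝒪) + 𝔪𝓜_m)/((𝓜_m ∩ z^{g+1}𝒪) + 𝔪𝓜_m)`.) -/
theorem statement5 (R : Subalgebra ℂ 𝒪) (c : ℕ) (hR : HasConductor R c)
    (m : ℕ) (D0 : Set ℕ) (g : ℕ → ℕ) (hflag : IsDFlag R m D0 g)
    (MM : ℕ → Submodule ↥R 𝒪)
    (hmono : ∀ i, i < m → MM i ≤ MM (i+1))
    (hstd : ∀ i ≤ m, IsStd R (MM i))
    (hD : ∀ i ≤ m, Dset R (MM i) = DFlagSet D0 g i) :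
    ∀ i, 1 ≤ i → i ≤ m →
      quotDim (((MM m).restrictScalars ℂ ⊓ zO (g i)) ⊔ mSmul R (MM m))
              (((MM m).restrictScalars ℂ ⊓ zO (g i + 1)) ⊔ mSmul R (MM m)) = 1 := by
  simp only [← fiberFiltration_eq_inf_zO_sup_mSmul]
  exact statement5_general hflag.2.1 hflag.notMem_SGamma_union MM hmono fun i hi =>
    orderSet_eq_of_Dset_eq_DFlagSet (hstd i hi) (hD i hi)

end
end

section
/- Let 𝒟 = (D_0,…,D_m) be a D-flag of length m with gaps g_1 < … < g_m, and let 𝓜_top be a standard module with D_{𝓜_top} = D_m satisfying dim_ℂ(𝓜̄^{(g_i)}/𝓜̄^{(g_i+1)}) = 1 for all 1 ≤ i ≤ m, where 𝓜̄ = 𝓜_top/𝔪𝓜_top and 𝓜̄^{(j)} is the image of 𝓜_top ∩ z^j𝒪 in 𝓜̄. Let 𝓜̄_0 ⊆ 𝓜̄ be any ℂ-subspace such that dim_ℂ(𝓜̄/𝓜̄_0) = m, dim_ℂ((𝓜̄_0 + 𝓜̄^{(g_i)})/(𝓜̄_0 + 𝓜̄^{(g_i+1)})) = 1 for every 1 ≤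 i ≤ m, and 𝓜̄_0 is not contained in 𝓜̄^{(1)}. Then the unique ℛ-submodule 𝓜_0 with 𝔪𝓜_top ⊆ 𝓜_0 ⊆ 𝓜_top whose image in 𝓜̄ equals 𝓜̄_0 is a standard module with D_{𝓜_0} = D_0; moreover, choosing for each i an element m̄_i ∈ 𝓜̄_0 + 𝓜̄^{(g_i)} generating ((𝓜̄_0 + 𝓜̄^{(g_i)})/𝓜̄_0) modulo 𝓜̄_0 + 𝓜̄^{(g_i+1)}, the submodule 𝓜_i with 𝔪𝓜_top ⊆ 𝓜_i ⊆ 𝓜_top lifting 𝓜̄_0 ⊕ ℂm̄_1 ⊕ … ⊕ ℂm̄_i is a standard module with D_{𝓜_i} = D_i. -/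
/-!
Elements of distinct orders cannot cancel. Hence, if two subspaces of `𝒪` have disjoint sets of
orders, their sum is direct and its orders are the union of theirs. Modulo `V`, each `mi i` may be
replaced by some `w i ∈ 𝓜_top` of order exactly `g i`, and `g i` is not an order of `V`. So `V` and
the span of the `w i` are independent, and since `V` has codimension `m` in `𝓜_top` they fill it:
the orders of `𝓜_top` are those of `V` together with `g 1, …, g m`. The same principle shows that
adjoining any subfamily of the `mi i` to `V` adds precisely the corresponding gaps.
-/

open PowerSeries

noncomputable section

section ValueSet

variable {K ι : Type*} [Field K] {V W : Submodule K K⟦X⟧} {s : Set ι} {w : ι → K⟦X⟧} {g : ι → ℕ}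

/-- The set of orders of the nonzero elements of a space of power series. It is `DeltaM` for an
arbitrary subspace, expressed through Mathlib's `ℕ∞`-valued order: as `order 0 = ⊤`, an element of
natural order is automatically nonzero. -/
def valueSet (V : Submodule K K⟦X⟧) : Set ℕ := {n | ∃ f ∈ V, f.order = n}

theorem valueSet_mono (h : V ≤ W) : valueSet V ⊆ valueSet W :=
  fun _ ⟨f, hf, hfn⟩ => ⟨f, h hf, hfn⟩

theorem valueSet_bot : valueSet (⊥ : Submodule K K⟦X⟧) = ∅ := by
  simp [valueSet]

theorem valueSet_span_singleton {f : K⟦X⟧} {n : ℕ} (hf : f.order = n) :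
    valueSet (K ∙ f) = {n} := by
  ext k
  constructor
  · rintro ⟨x, hx, hxk⟩
    obtain ⟨a, rfl⟩ := Submodule.mem_span_singleton.1 hx
    have ha : a ≠ 0 := by rintro rfl; simp at hxk
    have hle : (a • f).order ≤ f.order := by
      simpa [smul_smul, ha] using le_order_smul (a := a⁻¹) (φ := a • f)
    exact_mod_cast hxk.symm.trans ((hle.antisymm le_order_smul).trans hf)
  · rintro rfl
    exact ⟨f, Submodule.mem_span_singleton_self f, hf⟩

theorem disjoint_of_disjoint_valueSet (h : Disjoint (valueSet V) (valueSet W)) :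
    Disjoint V W := by
  refine Submodule.disjoint_def.2 fun f hfV hfW => ?_
  by_contra hf
  have hn : f.order = f.order.toNat := (coe_toNat_order hf).symm
  exact Set.disjoint_left.1 h ⟨f, hfV, hn⟩ ⟨f, hfW, hn⟩

theorem valueSet_sup (h : Disjoint (valueSet V) (valueSet W)) :
    valueSet (V ⊔ W) = valueSet V ∪ valueSet W := by
  apply (Set.union_subset (valueSet_mono le_sup_left) (valueSet_mono le_sup_right)).antisymm'
  rintro n ⟨_, hf, hn⟩
  obtain ⟨x, hx, y, hy, rfl⟩ := Submodule.mem_sup.1 hf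
  have hxy : x.order ≠ y.order := by
    intro he
    by_cases hx0 : x = 0
    · have hy0 : y = 0 := by rw [← order_eq_top, ← he, hx0, order_zero]
      simp [hx0, hy0] at hn
    · have hk : x.order = x.order.toNat := (coe_toNat_order hx0).symm
      exact Set.disjoint_left.1 h ⟨x, hx, hk⟩ ⟨y, hy, he ▸ hk⟩
  rw [order_add_of_order_ne x y hxy] at hn
  rcases min_choice x.order y.order with hmin | hmin
  · exact Or.inl ⟨x, hx, hmin ▸ hn⟩
  · exact Or.inr ⟨y, hy, hmin ▸ hn⟩

theorem valueSet_sup_span_image (hs : s.Finite) (hw : ∀ i ∈ s, (w i).order = g i)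
    (hg : s.InjOn g) (hgV : ∀ i ∈ s, g i ∉ valueSet V) :
    valueSet (V ⊔ Submodule.span K (w '' s)) = valueSet V ∪ g '' s := by
  induction s, hs using Set.Finite.induction_on with
  | empty => simp
  | @insert a t hat _ ih =>
    simp only [Set.forall_mem_insert] at hw hgV
    obtain ⟨hginj, hgat⟩ := (Set.injOn_insert hat).1 hg
    have ih := ih hw.2 hginj hgV.2
    have hdisj : Disjoint (valueSet (V ⊔ Submodule.span K (w '' t)))
        (valueSet (K ∙ w a)) := by
      rw [ih, valueSet_span_singleton hw.1, Set.disjoint_singleton_right]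
      exact not_or.2 ⟨hgV.1, hgat⟩
    rw [Set.image_insert_eq, Submodule.span_insert, sup_comm (K ∙ w a), ← sup_assoc,
      valueSet_sup hdisj, ih, valueSet_span_singleton hw.1, Set.union_assoc, Set.union_singleton,
      Set.image_insert_eq]

theorem valueSet_span_image (hs : s.Finite) (hw : ∀ i ∈ s, (w i).order = g i)
    (hg : s.InjOn g) : valueSet (Submodule.span K (w '' s)) = g '' s := by
  simpa [valueSet_bot] using valueSet_sup_span_image (V := ⊥) hs hw hg (by simp [valueSet_bot])

theorem linearIndepOn_of_injOn_order (hs : s.Finite) (hw : ∀ i ∈ s, (w i).order = g i)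
    (hg : s.InjOn g) : LinearIndepOn K w s := by
  refine linearIndepOn_iff_notMem_span.2 fun i hi hspan => ?_
  have hsub : s \ {i} ⊆ s := Set.sdiff_subset
  have hgi : g i ∈ g '' (s \ {i}) := by
    rw [← valueSet_span_image (hs.subset hsub) (fun j hj => hw j (hsub hj)) (hg.mono hsub)]
    exact ⟨w i, hspan, hw i hi⟩
  exact ((hg.mem_image_iff hsub hi).1 hgi).2 rfl

end ValueSet

section Codimension

variable {K E : Type*} [Field K] [AddCommGroup E] [Module K E] {V S M : Submodule K E}

theorem sup_eq_of_disjoint_of_finrank_quotient_eq [V.CoFG] (hVM : V ≤ M) (hSM : S ≤ M)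
    (hVS : Disjoint V S)
    (hdim : Module.finrank K (M ⧸ V.comap M.subtype) = Module.finrank K S) : V ⊔ S = M := by
  have : (V.comap M.subtype).CoFG := by
    rw [← V.ker_mkQ, ← LinearMap.ker_comp]
    exact .ker _
  let f : S →ₗ[K] M ⧸ V.comap M.subtype := (V.comap M.subtype).mkQ ∘ₗ Submodule.inclusion hSM
  have hf : Function.Injective f := by
    refine LinearMap.ker_eq_bot.1 (LinearMap.ker_eq_bot'.2 fun x hx => ?_)
    have hxV : (x : E) ∈ V := (Submodule.Quotient.mk_eq_zero (V.comap M.subtype)).1 hx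
    exact Subtype.ext (Submodule.disjoint_def.1 hVS x hxV x.2)
  have : FiniteDimensional K S := .of_injective f hf
  have hsurj : Function.Surjective f :=
    (LinearMap.injective_iff_surjective_of_finrank_eq_finrank hdim.symm).1 hf
  refine (sup_le hVM hSM).antisymm fun y hy => ?_
  obtain ⟨x, hx⟩ := hsurj (Submodule.Quotient.mk ⟨y, hy⟩)
  have hyx : y - x ∈ V := (Submodule.Quotient.eq (V.comap M.subtype)).1 hx.symm
  simpa using Submodule.add_mem_sup hyx x.2

theorem sup_span_image_congr {ι : Type*} {s : Set ι} {x y : ι → E}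
    (h : ∀ i ∈ s, x i - y i ∈ V) :
    V ⊔ Submodule.span K (x '' s) = V ⊔ Submodule.span K (y '' s) := by
  have himage : V.mkQ '' (x '' s) = V.mkQ '' (y '' s) := by
    simp only [Set.image_image]
    exact Set.image_congr fun i hi => (Submodule.Quotient.eq V).2 (h i hi)
  rw [← Submodule.comap_map_mkQ, ← Submodule.comap_map_mkQ, Submodule.map_span,
    Submodule.map_span, himage]

theorem span_image_eq_biSup_span_singleton {ι : Type*} (s : Set ι) (x : ι → E) :
    Submodule.span K (x '' s) = ⨆ i ∈ s, K ∙ x i := by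
  rw [Submodule.span_eq_iSup_of_singleton_spans, iSup_image]

end Codimension

theorem sup_span_image_eq_of_order {K ι : Type*} [Field K] {V M : Submodule K K⟦X⟧} [V.CoFG]
    {s : Set ι} {w : ι → K⟦X⟧} {g : ι → ℕ} (hs : s.Finite) (hVM : V ≤ M)
    (hdim : Module.finrank K (M ⧸ V.comap M.subtype) = s.ncard) (hwM : ∀ i ∈ s, w i ∈ M)
    (hw : ∀ i ∈ s, (w i).order = g i) (hg : s.InjOn g) (hgV : ∀ i ∈ s, g i ∉ valueSet V) :
    V ⊔ Submodule.span K (w '' s) = M := by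
  have hdisj : Disjoint V (Submodule.span K (w '' s)) := by
    apply disjoint_of_disjoint_valueSet
    rw [valueSet_span_image hs hw hg]
    exact Set.disjoint_right.2 (Set.forall_mem_image.2 hgV)
  have hcard : Module.finrank K (Submodule.span K (w '' s)) = s.ncard := by
    have := hs.fintype
    rw [Set.image_eq_range, finrank_span_eq_card (linearIndepOn_of_injOn_order hs hw hg),
      Set.ncard_eq_toFinset_card', Set.toFinset_card]
  exact sup_eq_of_disjoint_of_finrank_quotient_eq hVM
    (Submodule.span_le.2 (Set.image_subset_iff.2 hwM)) hdisj (hdim.trans hcard.symm)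

section OrderFiltration

variable {f x : 𝒪} {n : ℕ}

theorem mem_zO_iff_coeff : f ∈ zO n ↔ ∀ k < n, coeff k f = 0 := by
  rw [← X_pow_dvd_iff]
  exact exists_congr fun _ => eq_comm

theorem mem_zO_iff_le_order : f ∈ zO n ↔ n ≤ f.order :=
  mem_zO_iff_coeff.trans ⟨nat_le_order f n, fun h k hk =>
    coeff_of_lt_order k ((Nat.cast_lt.2 hk).trans_le h)⟩

theorem zO_anti : Antitone zO := fun _ _ h _ hf =>
  mem_zO_iff_le_order.2 ((Nat.cast_le.2 h).trans (mem_zO_iff_le_order.1 hf))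

theorem cofg_zO (n : ℕ) : (zO n).CoFG := by
  have hker : zO n = LinearMap.ker (LinearMap.pi fun k : Fin n => coeff (R := ℂ) k) := by
    ext f
    simp [mem_zO_iff_coeff, funext_iff, Fin.forall_iff]
  rw [hker]
  exact .ker _

theorem exists_mem_zO_mul_eq (hx : x.order = 0) (hf : f ∈ zO n) : ∃ h ∈ zO n, h * x = f := by
  have hx0 : constantCoeff x ≠ 0 := fun h => order_ne_zero_iff_constCoeff_eq_zero.2 h hx
  refine ⟨f * x⁻¹, mem_zO_iff_le_order.2 ?_, ?_⟩
  · exact (mem_zO_iff_le_order.1 hf).trans (le_self_add.trans (le_order_mul f x⁻¹))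
  · rw [mul_assoc, PowerSeries.inv_mul_cancel x hx0, mul_one]

theorem ne_zero_and_ord_eq_iff : f ≠ 0 ∧ ord f = n ↔ f.order = n := by
  by_cases hf : f = 0
  · simp [hf]
  have hord : ord f = f.order.toNat :=
    (Nat.sInf_le (coeff_order hf)).antisymm <| le_csInf ⟨_, coeff_order hf⟩ fun k hk =>
      ENat.toNat_le_of_le_natCast (order_le k hk)
  rw [hord, ← coe_toNat_order hf, Nat.cast_inj, ENat.toNat_natCast]
  exact and_iff_right hf

theorem eq_zero_or_ord_pos_iff : f = 0 ∨ 0 < ord f ↔ f ∈ zO 1 := by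
  rw [mem_zO_iff_le_order, Nat.cast_one, Order.one_le_iff_ne_zero, ← not_iff_not, not_not,
    not_or, Nat.pos_iff_ne_zero, not_not]
  exact ne_zero_and_ord_eq_iff

variable {V M : Submodule ℂ 𝒪}

/-- The class of `x` in `M / V` has order `n`, i.e. it lies in the image of `M ∩ zⁿ𝒪` but not in
that of `M ∩ zⁿ⁺¹𝒪`. Where consecutive steps of this filtration differ by one dimension, such an `x`
generates the quotient of the steps `n` and `n + 1`. -/
def HasOrderMod (V M : Submodule ℂ 𝒪) (x : 𝒪) (n : ℕ) : Prop :=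
  x ∈ V ⊔ (M ⊓ zO n) ∧ x ∉ V ⊔ (M ⊓ zO (n + 1))

theorem HasOrderMod.exists_order_eq (h : HasOrderMod V M x n) :
    ∃ w ∈ M, w.order = n ∧ x - w ∈ V := by
  obtain ⟨hx, hx'⟩ := h
  obtain ⟨v, hv, w, ⟨hwM, hwn⟩, rfl⟩ := Submodule.mem_sup.1 hx
  refine ⟨w, hwM, ?_, by simpa using hv⟩
  refine le_antisymm ?_ (mem_zO_iff_le_order.1 hwn)
  by_contra! hlt
  have hwn' : w ∈ zO (n + 1) := mem_zO_iff_le_order.2 (Order.add_one_le_of_lt hlt)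
  exact hx' (Submodule.add_mem_sup hv ⟨hwM, hwn'⟩)

theorem inf_zO_le_sup_of_mem_valueSet (hVM : V ≤ M) (hn : n ∈ valueSet V) :
    M ⊓ zO n ≤ V ⊔ (M ⊓ zO (n + 1)) := by
  obtain ⟨v, hv, hvn⟩ := hn
  rintro f ⟨hfM, hfn⟩
  have hcoeff : coeff n v ≠ 0 := (order_eq_nat.1 hvn).1
  let a : ℂ := coeff n f / coeff n v
  have hmem : f - a • v ∈ zO (n + 1) := by
    refine mem_zO_iff_coeff.2 fun k hk => ?_
    rcases (Nat.lt_succ_iff.1 hk).lt_or_eq with hlt | rfl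
    · simp [mem_zO_iff_coeff.1 hfn k hlt, (order_eq_nat.1 hvn).2 k hlt]
    · simp [a, hcoeff]
  rw [← add_sub_cancel (a • v) f]
  exact Submodule.add_mem_sup (V.smul_mem a hv) ⟨M.sub_mem hfM (M.smul_mem a (hVM hv)), hmem⟩

theorem HasOrderMod.notMem_valueSet (hVM : V ≤ M) (h : HasOrderMod V M x n) : n ∉ valueSet V :=
  fun hn => h.2 (sup_le le_sup_left (inf_zO_le_sup_of_mem_valueSet hVM hn) h.1)

variable {ι : Type*} {s : Set ι} {g : ι → ℕ} {y : ι → 𝒪}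

theorem exists_order_eq_and_sup_span_image_eq (hy : ∀ i ∈ s, HasOrderMod V M (y i) (g i)) :
    ∃ w : ι → 𝒪, (∀ i ∈ s, w i ∈ M) ∧ (∀ i ∈ s, (w i).order = g i) ∧
      V ⊔ Submodule.span ℂ (y '' s) = V ⊔ Submodule.span ℂ (w '' s) := by
  choose! w hwM hw hyw using fun i hi => (hy i hi).exists_order_eq
  exact ⟨w, hwM, hw, sup_span_image_congr hyw⟩

theorem valueSet_sup_span_image_of_hasOrderMod (hs : s.Finite) (hg : s.InjOn g) (hVM : V ≤ M)
    (hy : ∀ i ∈ s, HasOrderMod V M (y i) (g i)) :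
    valueSet (V ⊔ Submodule.span ℂ (y '' s)) = valueSet V ∪ g '' s := by
  obtain ⟨w, -, hw, hspan⟩ := exists_order_eq_and_sup_span_image_eq hy
  rw [hspan, valueSet_sup_span_image hs hw hg fun i hi => (hy i hi).notMem_valueSet hVM]

theorem sup_span_image_eq_of_hasOrderMod [V.CoFG] (hs : s.Finite) (hg : s.InjOn g) (hVM : V ≤ M)
    (hdim : quotDim M V = s.ncard) (hy : ∀ i ∈ s, HasOrderMod V M (y i) (g i)) :
    V ⊔ Submodule.span ℂ (y '' s) = M := by
  obtain ⟨w, hwM, hw, hspan⟩ := exists_order_eq_and_sup_span_image_eq hy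
  rw [hspan, sup_span_image_eq_of_order hs hVM hdim hwM hw hg fun i hi =>
    (hy i hi).notMem_valueSet hVM]

end OrderFiltration

section StandardModule

variable {R : Subalgebra ℂ 𝒪} {c : ℕ}

theorem zO_le_toSubmodule_of_hasConductor (hR : HasConductor R c) :
    zO c ≤ Subalgebra.toSubmodule R := by
  rintro _ ⟨f, rfl⟩
  exact hR.2.1 f

theorem deltaM_eq_valueSet (N : Submodule R 𝒪) : DeltaM R N = valueSet (N.restrictScalars ℂ) := by
  simp only [DeltaM, valueSet, ne_zero_and_ord_eq_iff, Submodule.restrictScalars_mem]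

theorem zO_le_mSmul (hc : zO c ≤ Subalgebra.toSubmodule R) {N : Submodule R 𝒪}
    (hN : 0 ∈ DeltaM R N) : zO (c + 1) ≤ mSmul R N := by
  obtain ⟨x, hxN, hx⟩ := hN
  intro f hf
  obtain ⟨h, hh, rfl⟩ := exists_mem_zO_mul_eq (ne_zero_and_ord_eq_iff.1 hx) hf
  exact Submodule.subset_span ⟨h, hc (zO_anti c.le_succ hh), x, hxN,
    eq_zero_or_ord_pos_iff.2 (zO_anti (Nat.le_add_left 1 c) hh), rfl⟩

theorem isStd_of_zero_mem_deltaM (hc : zO c ≤ Subalgebra.toSubmodule R) {N : Submodule R 𝒪}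
    (hN : 0 ∈ DeltaM R N) : IsStd R N := by
  refine ⟨?_, hN⟩
  obtain ⟨x, hxN, hx⟩ := hN
  have hzO : zO c ≤ (R ∙ x).restrictScalars ℂ := by
    intro f hf
    obtain ⟨h, hh, rfl⟩ := exists_mem_zO_mul_eq (ne_zero_and_ord_eq_iff.1 hx) hf
    exact Submodule.mem_span_singleton.2 ⟨⟨h, hc hh⟩, rfl⟩
  have : ((R ∙ x).restrictScalars ℂ).CoFG := .of_le hzO (cofg_zO c)
  have : Module.Finite ℂ (𝒪 ⧸ (R ∙ x)) := this
  have : IsNoetherian R (𝒪 ⧸ (R ∙ x)) := isNoetherian_of_tower ℂ inferInstance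
  refine Submodule.fg_of_fg_map_of_fg_inf_ker (R ∙ x).mkQ (IsNoetherian.noetherian _) ?_
  rw [Submodule.ker_mkQ, inf_eq_right.2 ((Submodule.span_singleton_le_iff_mem x N).2 hxN)]
  exact Submodule.fg_span_singleton x

variable {N : Submodule R 𝒪} {W : Submodule ℂ 𝒪}

theorem mul_mem_of_mSmul_le (hNW : mSmul R N ≤ W) (hWN : W ≤ N.restrictScalars ℂ) {r y : 𝒪}
    (hr : r ∈ R) (hy : y ∈ W) : r * y ∈ W := by
  set a : ℂ := constantCoeff r with ha
  have hra : r - algebraMap ℂ 𝒪 a ∈ zO 1 := by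
    simp [mem_zO_iff_le_order, one_le_order_iff_constCoeff_eq_zero, ha]
  have hmem : (r - algebraMap ℂ 𝒪 a) * y ∈ mSmul R N := Submodule.subset_span
    ⟨_, R.sub_mem hr (R.algebraMap_mem a), y, hWN hy, eq_zero_or_ord_pos_iff.2 hra, rfl⟩
  have hsplit : r * y = a • y + (r - algebraMap ℂ 𝒪 a) * y := by
    rw [Algebra.smul_def]
    ring
  rw [hsplit]
  exact W.add_mem (W.smul_mem a hy) (hNW hmem)

/-- A `ℂ`-subspace `W` with `𝔪N ≤ W ≤ N`, regarded as an `R`-submodule: the lift to `N` of a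
subspace of `N / 𝔪N`. -/
def liftSubmodule (hNW : mSmul R N ≤ W) (hWN : W ≤ N.restrictScalars ℂ) : Submodule R 𝒪 :=
  { W with smul_mem' := fun r _ hy => mul_mem_of_mSmul_le hNW hWN r.2 hy }

end StandardModule

theorem union_inter_eq_union_of_subset {α : Type*} {A B C D G : Set α} (hAB : Disjoint A B)
    (hDB : Disjoint D B) (hCB : C ⊆ B) (h : (A ∪ B) ∩ G = D ∪ B) : (A ∪ C) ∩ G = D ∪ C := by
  have hBG : B ⊆ G := (Set.subset_union_right.trans_eq h.symm).trans Set.inter_subset_right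
  have hAG : A ∩ G = D := by
    rw [Set.union_inter_distrib_right, Set.inter_eq_left.2 hBG] at h
    calc A ∩ G = (A ∩ G ∪ B) \ B :=
          ((hAB.mono_left Set.inter_subset_left).sup_sdiff_cancel_right).symm
      _ = D := by rw [h]; exact hDB.sup_sdiff_cancel_right
  rw [Set.union_inter_distrib_right, hAG, Set.inter_eq_left.2 (hCB.trans hBG)]

theorem statement8_general (R : Subalgebra ℂ 𝒪) {c : ℕ} (hc : zO c ≤ Subalgebra.toSubmodule R)
    {ι : Type*} {s : Set ι} (hs : s.Finite) {D0 : Set ℕ} {g : ι → ℕ} (hg : s.InjOn g)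
    (hgD0 : ∀ i ∈ s, g i ∉ D0) (Mtop : Submodule R 𝒪) (hDs : Dset R Mtop = D0 ∪ g '' s)
    {V : Submodule ℂ 𝒪} (hV1 : mSmul R Mtop ≤ V) (hV2 : V ≤ Mtop.restrictScalars ℂ)
    (hVdim : quotDim (Mtop.restrictScalars ℂ) V = s.ncard) (hVnot : ¬ V ≤ zO 1) {mi : ι → 𝒪}
    (hmi : ∀ i ∈ s, HasOrderMod V (Mtop.restrictScalars ℂ) (mi i) (g i))
    {J : Set ι} (hJ : J ⊆ s) :
    ∃ MJ : Submodule R 𝒪,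
      (MJ : Set 𝒪) = ((V ⊔ ⨆ j ∈ J, (ℂ ∙ mi j) : Submodule ℂ 𝒪) : Set 𝒪) ∧
      IsStd R MJ ∧ Dset R MJ = D0 ∪ g '' J := by
  obtain ⟨x, hxV, hx⟩ := SetLike.not_le_iff_exists.1 hVnot
  have hx0 : x.order = 0 := by
    simpa only [mem_zO_iff_le_order, Nat.cast_one, Order.one_le_iff_ne_zero, not_not] using hx
  have hzero : ∀ N : Submodule R 𝒪, V ≤ N.restrictScalars ℂ → 0 ∈ DeltaM R N := fun N hN =>
    ⟨x, hN hxV, ne_zero_and_ord_eq_iff.2 hx0⟩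
  have : V.CoFG := .of_le ((zO_le_mSmul hc (hzero Mtop hV2)).trans hV1) (cofg_zO (c + 1))
  have hMs : V ⊔ Submodule.span ℂ (mi '' s) = Mtop.restrictScalars ℂ :=
    sup_span_image_eq_of_hasOrderMod hs hg hV2 hVdim hmi
  have hJM : V ⊔ Submodule.span ℂ (mi '' J) ≤ Mtop.restrictScalars ℂ :=
    hMs ▸ sup_le_sup_left (Submodule.span_mono (Set.image_mono hJ)) V
  let MJ : Submodule R 𝒪 := liftSubmodule (hV1.trans le_sup_left) hJM
  have hMJ : (MJ : Set 𝒪) = (V ⊔ ⨆ j ∈ J, (ℂ ∙ mi j) : Submodule ℂ 𝒪) := by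
    rw [← span_image_eq_biSup_span_singleton]
    rfl
  have hMvalues : DeltaM R Mtop = valueSet V ∪ g '' s := by
    rw [deltaM_eq_valueSet, ← hMs, valueSet_sup_span_image_of_hasOrderMod hs hg hV2 hmi]
  have hJvalues : DeltaM R MJ = valueSet V ∪ g '' J := by
    rw [deltaM_eq_valueSet]
    exact valueSet_sup_span_image_of_hasOrderMod (hs.subset hJ) (hg.mono hJ) hV2
      fun i hi => hmi i (hJ hi)
  have hVs : Disjoint (valueSet V) (g '' s) :=
    Set.disjoint_right.2 (Set.forall_mem_image.2 fun i hi => (hmi i hi).notMem_valueSet hV2)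
  have hD0s : Disjoint D0 (g '' s) := Set.disjoint_right.2 (Set.forall_mem_image.2 hgD0)
  refine ⟨MJ, hMJ, isStd_of_zero_mem_deltaM hc (hzero MJ le_sup_left), ?_⟩
  rw [Dset, hMvalues] at hDs
  rw [Dset, hJvalues, union_inter_eq_union_of_subset hVs hD0s (Set.image_mono hJ) hDs]

/-- Detailed lifting statement: given `𝓜_top` realizing `D_m` with the
one-dimensionality conditions, and a lift `V` of a subspace `𝓜̄_0 ⊆ 𝓜̄` of
codimension `m` satisfying the stated conditions (with `𝔪𝓜_top ⊆ V ⊆ 𝓜_top`),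
the module with carrier `V` is a standard module with `D`-set `D_0`, and for
any choices `m_i` generating `(𝓜̄_0+𝓜̄^{(g_i)})/𝓜̄_0` modulo `𝓜̄_0+𝓜̄^{(g_i+1)}`,
the lift of `𝓜̄_0 ⊕ ℂm̄_1 ⊕ … ⊕ ℂm̄_i` is a standard module with `D`-set `D_i`. -/
theorem statement8 (R : Subalgebra ℂ 𝒪) (c : ℕ) (hR : HasConductor R c)
    (m : ℕ) (D0 : Set ℕ) (g : ℕ → ℕ) (hflag : IsDFlag R m D0 g)
    (Mtop : Submodule ↥R 𝒪) (hstd : IsStd R Mtop)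
    (hDm : Dset R Mtop = DFlagSet D0 g m)
    (hdim : ∀ i, 1 ≤ i → i ≤ m →
      quotDim (((Mtop.restrictScalars ℂ) ⊓ zO (g i)) ⊔ mSmul R Mtop)
              (((Mtop.restrictScalars ℂ) ⊓ zO (g i + 1)) ⊔ mSmul R Mtop) = 1)
    (V : Submodule ℂ 𝒪)
    (hV1 : mSmul R Mtop ≤ V) (hV2 : V ≤ Mtop.restrictScalars ℂ)
    (hVdim : quotDim (Mtop.restrictScalars ℂ) V = m)
    (hVdim2 : ∀ i, 1 ≤ i → i ≤ m →
      quotDim (V ⊔ ((Mtop.restrictScalars ℂ) ⊓ zO (g i)))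
              (V ⊔ ((Mtop.restrictScalars ℂ) ⊓ zO (g i + 1))) = 1)
    (hVnot : ¬ V ≤ ((Mtop.restrictScalars ℂ) ⊓ zO 1) ⊔ mSmul R Mtop)
    (mi : ℕ → 𝒪)
    (hmi1 : ∀ i, 1 ≤ i → i ≤ m → mi i ∈ V ⊔ ((Mtop.restrictScalars ℂ) ⊓ zO (g i)))
    (hmi2 : ∀ i, 1 ≤ i → i ≤ m → mi i ∉ V ⊔ ((Mtop.restrictScalars ℂ) ⊓ zO (g i + 1))) :
    (∃ M0 : Submodule ↥R 𝒪, (M0 : Set 𝒪) = (V : Set 𝒪) ∧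
      IsStd R M0 ∧ Dset R M0 = D0) ∧
    ∀ i ≤ m, ∃ Mi : Submodule ↥R 𝒪,
      (Mi : Set 𝒪) = ((V ⊔ ⨆ j ∈ Set.Icc 1 i, (ℂ ∙ mi j) : Submodule ℂ 𝒪) : Set 𝒪) ∧
      IsStd R Mi ∧ Dset R Mi = DFlagSet D0 g i := by
  have hlift := fun i (hi : i ≤ m) => statement8_general R (zO_le_toSubmodule_of_hasConductor hR)
    (Set.finite_Icc 1 m) hflag.2.1.injOn (fun j hj => (hflag.2.2.1 j hj.1 hj.2).2) Mtop hDm hV1 hV2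
    (by simpa using hVdim) (fun h => hVnot (le_sup_of_le_left (le_inf hV2 h)))
    (fun j hj => ⟨hmi1 j hj.1 hj.2, hmi2 j hj.1 hj.2⟩) (Set.Icc_subset_Icc_right hi)
  exact ⟨by simpa using hlift 0 m.zero_le, hlift⟩

end
end
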